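/- arXiv:1810.12805 — 2 statements merged into one kernel-verified Lean document; each statement's English description precedes it below -/
import Mathlib

section
/- Every critical point of ℓ_λ in U(λ,θ) is an isolated local minimum: if W ∈ U(λ,θ), ℓ_λ is differentiable at W, and ∇ℓ_λ(W) = 0, then there exists ε > 0 such that ℓ_λ(V) > ℓ_λ(W) for all V with 0 < ‖V − W‖ < ε. -/
open scoped BigOperators

/-- Index set for all weights of the network: a weight `w^i_{j,k}` connects
neuron `j` in layer `i` to neuron `k` in layer `i+1`. -/
abbrev WeightIdx (n : ℕ → ℕ) (H : ℕ) : Type :=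
  (i : Fin (H + 1)) × (Fin (n i) × Fin (n (i + 1)))

/-- Weight space `ℝ^m`, with the Euclidean norm. -/
abbrev WeightSpace (n : ℕ → ℕ) (H : ℕ) : Type :=
  EuclideanSpace ℝ (WeightIdx n H)

/-- Activations of the feed-forward ReLU network:
`x_0 = a`, `x_{k+1} = σ(W_k^T x_k)`. -/
def netAct (n : ℕ → ℕ) (H : ℕ) (W : WeightSpace n H)
    (a : EuclideanSpace ℝ (Fin (n 0))) : (k : ℕ) → k ≤ H + 1 → (Fin (n k) → ℝ)
  | 0, _ => a
  | k + 1, h => fun j =>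
      max (∑ l : Fin (n k), W ⟨⟨k, h⟩, (l, j)⟩ * netAct n H W a k (Nat.le_of_succ_le h) l) 0

/-- Scalar output of the ReLU network, `y(a, W)`. -/
def netOut (n : ℕ → ℕ) (H : ℕ) (hout : n (H + 1) = 1) (W : WeightSpace n H)
    (a : EuclideanSpace ℝ (Fin (n 0))) : ℝ :=
  netAct n H W a (H + 1) le_rfl ⟨0, by omega⟩

/-- Quadratic training loss `ℓ(W)`. -/
noncomputable def loss (n : ℕ → ℕ) (H N : ℕ) (hout : n (H + 1) = 1)
    (a : Fin N → EuclideanSpace ℝ (Fin (n 0)))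
    (f : EuclideanSpace ℝ (Fin (n 0)) → ℝ) (W : WeightSpace n H) : ℝ :=
  (1 / (2 * (N : ℝ))) * ∑ i, (f (a i) - netOut n H hout W (a i)) ^ 2

/-- Regularized loss `ℓ_λ(W) = ℓ(W) + (λ/2)‖W‖²`. -/
noncomputable def lossReg (n : ℕ → ℕ) (H N : ℕ) (hout : n (H + 1) = 1)
    (a : Fin N → EuclideanSpace ℝ (Fin (n 0)))
    (f : EuclideanSpace ℝ (Fin (n 0)) → ℝ) (lam : ℝ) (W : WeightSpace n H) : ℝ :=
  loss n H N hout a f W + lam / 2 * ‖W‖ ^ 2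

/-- The `i`-th weight matrix `W_i` of a weight vector `W`. -/
def block (n : ℕ → ℕ) (H : ℕ) (W : WeightSpace n H) (i : Fin (H + 1)) :
    Matrix (Fin (n i)) (Fin (n (i + 1))) ℝ :=
  Matrix.of fun j k => W ⟨i, (j, k)⟩

/-- Operator norm (induced by the Euclidean norms) of a matrix. -/
noncomputable def opNorm2 {p q : ℕ} (M : Matrix (Fin p) (Fin q) ℝ) : ℝ :=
  ‖LinearMap.toContinuousLinearMap (Matrix.toEuclideanLin M)‖

/-- `‖W‖_* = max_i ‖W_i‖₂`. -/
noncomputable def starNorm (n : ℕ → ℕ) (H : ℕ) (W : WeightSpace n H) : ℝ :=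
  ⨆ i : Fin (H + 1), opNorm2 (block n H W i)

/-- The set `U(λ,θ)`. -/
noncomputable def Uset (n : ℕ → ℕ) (H N : ℕ) (hout : n (H + 1) = 1)
    (a : Fin N → EuclideanSpace ℝ (Fin (n 0)))
    (f : EuclideanSpace ℝ (Fin (n 0)) → ℝ) (lam θ r : ℝ) : Set (WeightSpace n H) :=
  {W | Real.sqrt (loss n H N hout a f W) * starNorm n H W ^ (H - 1) <
    (lam - θ) / (Real.sqrt 2 * ((H : ℝ) * ((H : ℝ) + 1)) * r)}

noncomputable def nm {p : ℕ} (v : Fin p → ℝ) : ℝ := ‖(WithLp.toLp 2 v : EuclideanSpace ℝ (Fin p))‖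

lemma nm_nonneg {p : ℕ} (v : Fin p → ℝ) : 0 ≤ nm v := norm_nonneg _

lemma nm_eq {p : ℕ} (v : Fin p → ℝ) : nm v = Real.sqrt (∑ i, v i ^ 2) := by
  simp [nm, EuclideanSpace.norm_eq]

lemma nm_add_le {p : ℕ} (u v : Fin p → ℝ) : nm (u + v) ≤ nm u + nm v := by
  unfold nm
  rw [WithLp.toLp_add]
  exact norm_add_le _ _

lemma nm_mono {p : ℕ} {u v : Fin p → ℝ} (h : ∀ j, |u j| ≤ |v j|) : nm u ≤ nm v := by
  rw [nm_eq, nm_eq]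
  apply Real.sqrt_le_sqrt
  exact Finset.sum_le_sum fun i _ => sq_le_sq.mpr (h i)

lemma abs_le_nm {p : ℕ} (v : Fin p → ℝ) (j : Fin p) : |v j| ≤ nm v := by
  rw [nm_eq]
  apply Real.abs_le_sqrt
  exact Finset.single_le_sum (f := fun i => v i ^ 2) (fun i _ => sq_nonneg _) (Finset.mem_univ j)

/-- the linear map `x ↦ W_kᵀ x` -/
def lin (n : ℕ → ℕ) (H : ℕ) (W : WeightSpace n H) (k : ℕ) (h : k + 1 ≤ H + 1)
    (x : Fin (n k) → ℝ) : Fin (n (k + 1)) → ℝ :=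
  fun j => ∑ l : Fin (n k), W ⟨⟨k, h⟩, (l, j)⟩ * x l

section
open scoped Matrix.Norms.L2Operator

lemma nm_lin_le (n : ℕ → ℕ) (H : ℕ) (W : WeightSpace n H) (k : ℕ) (h : k + 1 ≤ H + 1)
    (x : Fin (n k) → ℝ) : nm (lin n H W k h x) ≤ starNorm n H W * nm x := by
  have h1 : opNorm2 (block n H W ⟨k, h⟩) ≤ starNorm n H W :=
    le_ciSup (f := fun i : Fin (H + 1) => opNorm2 (block n H W i))
      (Set.finite_range _).bddAbove ⟨k, h⟩
  have h2 : opNorm2 (block n H W ⟨k, h⟩) = ‖(block n H W ⟨k, h⟩).transpose‖ := by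
    rw [← Matrix.conjTranspose_eq_transpose_of_trivial, Matrix.l2_opNorm_conjTranspose,
      Matrix.l2_opNorm_def]
    rfl
  have h3 := Matrix.l2_opNorm_mulVec (block n H W ⟨k, h⟩).transpose
    (WithLp.toLp 2 x : EuclideanSpace ℝ (Fin (n k)))
  refine le_trans h3 ?_
  rw [← h2]
  exact mul_le_mul_of_nonneg_right h1 (norm_nonneg _)

end

lemma starNorm_nonneg (n : ℕ → ℕ) (H : ℕ) (W : WeightSpace n H) : 0 ≤ starNorm n H W :=
  Real.iSup_nonneg fun _ => norm_nonneg _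

lemma nm_lin_le' (n : ℕ → ℕ) (H : ℕ) (W : WeightSpace n H) (k : ℕ) (h : k + 1 ≤ H + 1)
    (x : Fin (n k) → ℝ) : nm (lin n H W k h x) ≤ ‖W‖ * nm x := by
  rw [nm_eq, nm_eq, EuclideanSpace.norm_eq, ← Real.sqrt_mul (by positivity)]
  apply Real.sqrt_le_sqrt
  calc ∑ j, lin n H W k h x j ^ 2
      ≤ ∑ j, (∑ l : Fin (n k), W ⟨⟨k, h⟩, (l, j)⟩ ^ 2) * ∑ l, x l ^ 2 :=
        Finset.sum_le_sum fun j _ => Finset.sum_mul_sq_le_sq_mul_sq _ _ _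
    _ = (∑ j, (∑ l : Fin (n k), W ⟨⟨k, h⟩, (l, j)⟩ ^ 2)) * ∑ l, x l ^ 2 := by
        rw [Finset.sum_mul]
    _ ≤ _ := by
        apply mul_le_mul_of_nonneg_right _ (by positivity)
        rw [Finset.sum_comm, Fintype.sum_sigma]
        simp only [Real.norm_eq_abs, sq_abs]
        refine le_trans (le_of_eq ?_) (Finset.single_le_sum
          (f := fun i : Fin (H + 1) => ∑ y : Fin (n i) × Fin (n (i + 1)), W ⟨i, y⟩ ^ 2)
          (fun i _ => by positivity) (Finset.mem_univ ⟨k, h⟩))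
        rw [Fintype.sum_prod_type]

lemma lin_add_left (n : ℕ → ℕ) (H : ℕ) (W D : WeightSpace n H) (k : ℕ) (h : k + 1 ≤ H + 1)
    (x : Fin (n k) → ℝ) : lin n H (W + D) k h x = lin n H W k h x + lin n H D k h x := by
  funext j
  simp [lin, add_mul, Finset.sum_add_distrib]

lemma lin_sub_right (n : ℕ → ℕ) (H : ℕ) (W : WeightSpace n H) (k : ℕ) (h : k + 1 ≤ H + 1)
    (x y : Fin (n k) → ℝ) : lin n H W k h (x - y) = lin n H W k h x - lin n H W k h y := by
  funext j
  simp [lin, mul_sub, Finset.sum_sub_distrib]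

lemma lin_smul_left (n : ℕ → ℕ) (H : ℕ) (W : WeightSpace n H) (t : ℝ) (k : ℕ) (h : k + 1 ≤ H + 1)
    (x : Fin (n k) → ℝ) : lin n H (t • W) k h x = t • lin n H W k h x := by
  funext j
  simp [lin, mul_assoc, Finset.mul_sum]

lemma lin_smul_right (n : ℕ → ℕ) (H : ℕ) (W : WeightSpace n H) (t : ℝ) (k : ℕ) (h : k + 1 ≤ H + 1)
    (x : Fin (n k) → ℝ) : lin n H W k h (t • x) = t • lin n H W k h x := by
  funext j
  simp only [lin, Pi.smul_apply, smul_eq_mul, Finset.mul_sum]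
  exact Finset.sum_congr rfl fun _ _ => by ring

/-- directional derivative of ReLU at `z` in direction `h` -/
noncomputable def reluD (z h : ℝ) : ℝ := if 0 < z then h else if z < 0 then 0 else max h 0

lemma reluD_lip (z h h' : ℝ) : |reluD z h - reluD z h'| ≤ |h - h'| := by
  unfold reluD
  split_ifs
  · exact le_rfl
  · simp
  · exact abs_max_sub_max_le_abs h h' 0

lemma reluD_smul (z h t : ℝ) (ht : 0 ≤ t) : reluD z (t * h) = t * reluD z h := by
  unfold reluD
  split_ifs
  · rfl
  · simp
  · rw [mul_max_of_nonneg _ _ ht, mul_zero]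

lemma relu_expand (z : ℝ) : ∀ᶠ u in nhds z, max u 0 - max z 0 = reluD z (u - z) := by
  rcases lt_trichotomy z 0 with hz | hz | hz
  · filter_upwards [gt_mem_nhds hz] with u hu
    simp [reluD, hz, hz.le, hu.le, not_lt.mpr hz.le]
  · subst hz
    exact Filter.Eventually.of_forall fun u => by simp [reluD]
  · filter_upwards [lt_mem_nhds hz] with u hu
    simp [reluD, hz, hz.le, hu.le]

/-- one-sided directional derivative of the activations -/
noncomputable def netD (n : ℕ → ℕ) (H : ℕ) (W D : WeightSpace n H)
    (a : EuclideanSpace ℝ (Fin (n 0))) : (k : ℕ) → k ≤ H + 1 → (Fin (n k) → ℝ)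
  | 0, _ => 0
  | k + 1, h => fun j =>
      reluD (lin n H W k h (netAct n H W a k (Nat.le_of_succ_le h)) j)
        (lin n H D k h (netAct n H W a k (Nat.le_of_succ_le h)) j +
          lin n H W k h (netD n H W D a k (Nat.le_of_succ_le h)) j)

lemma netAct_succ (n : ℕ → ℕ) (H : ℕ) (W : WeightSpace n H)
    (a : EuclideanSpace ℝ (Fin (n 0))) (k : ℕ) (h : k + 1 ≤ H + 1) (j) :
    netAct n H W a (k + 1) h j =
      max (lin n H W k h (netAct n H W a k (Nat.le_of_succ_le h)) j) 0 := rfl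

lemma netD_smul (n : ℕ → ℕ) (H : ℕ) (W D : WeightSpace n H)
    (a : EuclideanSpace ℝ (Fin (n 0))) (t : ℝ) (ht : 0 ≤ t) (k : ℕ) (h : k ≤ H + 1) :
    netD n H W (t • D) a k h = t • netD n H W D a k h := by
  induction k with
  | zero => simp [netD]
  | succ k ih =>
    funext j
    simp only [netD, ih, lin_smul_left, lin_smul_right, Pi.smul_apply, smul_eq_mul]
    rw [← mul_add, reluD_smul _ _ _ ht]

lemma netAct_cont (n : ℕ → ℕ) (H : ℕ) (a : EuclideanSpace ℝ (Fin (n 0))) (k : ℕ)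
    (h : k ≤ H + 1) : Continuous fun W => netAct n H W a k h := by
  induction k with
  | zero => exact continuous_const
  | succ k ih =>
    have := ih (Nat.le_of_succ_le h)
    apply continuous_pi
    intro j
    simp only [netAct]
    have h2 : ∀ l, Continuous fun W : WeightSpace n H =>
      netAct n H W a k (Nat.le_of_succ_le h) l := fun l => (continuous_apply l).comp this
    fun_prop

lemma act_norm (n : ℕ → ℕ) (H : ℕ) (W : WeightSpace n H) (a : EuclideanSpace ℝ (Fin (n 0)))
    (r M : ℝ) (ha : ‖a‖ ≤ r) (hM : starNorm n H W ≤ M) (k : ℕ)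
    (h : k ≤ H + 1) : nm (netAct n H W a k h) ≤ M ^ k * r := by
  have hM0 := (starNorm_nonneg n H W).trans hM
  induction k with
  | zero => simpa [netAct, nm] using ha
  | succ k ih =>
    calc nm (netAct n H W a (k + 1) h)
        ≤ nm (lin n H W k h (netAct n H W a k (Nat.le_of_succ_le h))) := by
          apply nm_mono
          intro j
          rw [netAct_succ]
          simpa using abs_max_sub_max_le_abs
            (lin n H W k h (netAct n H W a k (Nat.le_of_succ_le h)) j) 0 0
      _ ≤ starNorm n H W * nm (netAct n H W a k (Nat.le_of_succ_le h)) := nm_lin_le ..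
      _ ≤ M * (M ^ k * r) := mul_le_mul hM (ih _) (nm_nonneg _) hM0
      _ = M ^ (k + 1) * r := by ring

lemma act_diff (n : ℕ → ℕ) (H : ℕ) (W D : WeightSpace n H) (a : EuclideanSpace ℝ (Fin (n 0)))
    (r M : ℝ) (ha : ‖a‖ ≤ r) (hM : starNorm n H W + ‖D‖ ≤ M) (k : ℕ)
    (h : k ≤ H + 1) : nm (netAct n H (W + D) a k h - netAct n H W a k h) ≤
      k * M ^ (k - 1) * r * ‖D‖ := by
  have hM1 : starNorm n H W ≤ M := by linarith [norm_nonneg D]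
  have hM0 := (starNorm_nonneg n H W).trans hM1
  induction k with
  | zero => simp [netAct, nm]
  | succ k ih =>
    have ih' := ih (Nat.le_of_succ_le h)
    set xV := netAct n H (W + D) a k (Nat.le_of_succ_le h) with hxV
    set xW := netAct n H W a k (Nat.le_of_succ_le h) with hxW
    have hx := act_norm n H W a r M ha hM1 k (Nat.le_of_succ_le h)
    have e : lin n H (W + D) k h xV - lin n H W k h xW =
        (lin n H W k h (xV - xW) + lin n H D k h (xV - xW)) + lin n H D k h xW := by
      rw [lin_sub_right, lin_sub_right, lin_add_left]; abel
    calc nm (netAct n H (W + D) a (k + 1) h - netAct n H W a (k + 1) h)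
        ≤ nm (lin n H (W + D) k h xV - lin n H W k h xW) := by
          apply nm_mono
          intro j
          simp only [Pi.sub_apply, netAct_succ]
          exact abs_max_sub_max_le_abs _ _ _
      _ ≤ (starNorm n H W * nm (xV - xW) + ‖D‖ * nm (xV - xW)) + ‖D‖ * nm xW := by
          rw [e]
          exact (nm_add_le _ _).trans (add_le_add ((nm_add_le _ _).trans
            (add_le_add (nm_lin_le ..) (nm_lin_le' ..))) (nm_lin_le' ..))
      _ = (starNorm n H W + ‖D‖) * nm (xV - xW) + ‖D‖ * nm xW := by ring
      _ ≤ M * (k * M ^ (k - 1) * r * ‖D‖) + ‖D‖ * (M ^ k * r) :=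
          add_le_add (mul_le_mul hM ih' (nm_nonneg _) hM0)
            (mul_le_mul_of_nonneg_left hx (norm_nonneg _))
      _ = ((k + 1 : ℕ) : ℝ) * M ^ (k + 1 - 1) * r * ‖D‖ := by
          rcases k with _ | k
          · simp; ring
          · simp only [Nat.add_sub_cancel]; push_cast; ring

lemma act_err (n : ℕ → ℕ) (H : ℕ) (W : WeightSpace n H) (a : EuclideanSpace ℝ (Fin (n 0)))
    (r : ℝ) (ha : ‖a‖ ≤ r) (k : ℕ) (h : k ≤ H + 1) :
    ∀ᶠ D : WeightSpace n H in nhds 0,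
    nm (netAct n H (W + D) a k h - netAct n H W a k h - netD n H W D a k h) ≤
      k * (k - 1) / 2 * (starNorm n H W + ‖D‖) ^ (k - 2) * r * ‖D‖ ^ 2 := by
  induction k with
  | zero => exact Filter.Eventually.of_forall fun D => by simp [netAct, netD, nm]
  | succ k ih =>
    have hcont : ∀ j, Filter.Tendsto (fun D : WeightSpace n H =>
        lin n H (W + D) k h (netAct n H (W + D) a k (Nat.le_of_succ_le h)) j) (nhds 0)
        (nhds (lin n H W k h (netAct n H W a k (Nat.le_of_succ_le h)) j)) := by
      intro j
      have h1 := netAct_cont n H a k (Nat.le_of_succ_le h)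
      have h2 : ∀ l, Continuous fun W : WeightSpace n H =>
        netAct n H W a k (Nat.le_of_succ_le h) l := fun l => (continuous_apply l).comp h1
      have h3 : Continuous fun V : WeightSpace n H =>
        lin n H V k h (netAct n H V a k (Nat.le_of_succ_le h)) j := by
        unfold lin; fun_prop
      have h4 := (h3.comp (continuous_const_add W)).tendsto 0
      simpa [Function.comp_def] using h4
    have hev := Filter.eventually_all.mpr fun j => (hcont j).eventually (relu_expand _)
    filter_upwards [ih (Nat.le_of_succ_le h), hev] with D ih' hD
    have hM0 : 0 ≤ starNorm n H W + ‖D‖ := add_nonneg (starNorm_nonneg _ _ _) (norm_nonneg _)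
    have hx := act_diff n H W D a r _ ha le_rfl k (Nat.le_of_succ_le h)
    set M := starNorm n H W + ‖D‖ with hM
    have hM1 : starNorm n H W ≤ M := by linarith [norm_nonneg D]
    set xV := netAct n H (W + D) a k (Nat.le_of_succ_le h) with hxV
    set xW := netAct n H W a k (Nat.le_of_succ_le h) with hxW
    set x' := netD n H W D a k (Nat.le_of_succ_le h) with hx'
    have e : (lin n H (W + D) k h xV - lin n H W k h xW) - (lin n H D k h xW + lin n H W k h x') =
        lin n H W k h (xV - xW - x') + lin n H D k h (xV - xW) := by
      simp only [lin_sub_right, lin_add_left]; abel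
    calc nm (netAct n H (W + D) a (k + 1) h - netAct n H W a (k + 1) h -
            netD n H W D a (k + 1) h)
        ≤ nm ((lin n H (W + D) k h xV - lin n H W k h xW) -
            (lin n H D k h xW + lin n H W k h x')) := by
          apply nm_mono
          intro j
          simp only [Pi.sub_apply, Pi.add_apply, netAct_succ]
          rw [hD j]
          exact reluD_lip _ _ _
      _ ≤ starNorm n H W * nm (xV - xW - x') + ‖D‖ * nm (xV - xW) := by
          rw [e]
          exact (nm_add_le _ _).trans (add_le_add (nm_lin_le ..) (nm_lin_le' ..))
      _ ≤ M * (k * (k - 1) / 2 * M ^ (k - 2) * r * ‖D‖ ^ 2) +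
            ‖D‖ * (k * M ^ (k - 1) * r * ‖D‖) :=
          add_le_add (mul_le_mul hM1 ih' (nm_nonneg _) hM0)
            (mul_le_mul_of_nonneg_left hx (norm_nonneg _))
      _ = ((k + 1 : ℕ) : ℝ) * (((k + 1 : ℕ) : ℝ) - 1) / 2 * M ^ (k + 1 - 2) * r * ‖D‖ ^ 2 := by
          rcases k with _ | _ | k
          · simp
          · norm_num; ring
          · simp only [Nat.add_sub_cancel, Nat.reduceSubDiff]; push_cast; ring

/-- one-sided directional derivative of the regularized loss -/
noncomputable def lossD (n : ℕ → ℕ) (H N : ℕ) (hout : n (H + 1) = 1)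
    (a : Fin N → EuclideanSpace ℝ (Fin (n 0)))
    (f : EuclideanSpace ℝ (Fin (n 0)) → ℝ) (lam : ℝ) (W D : WeightSpace n H) : ℝ :=
  -((1 / (N : ℝ)) * ∑ i, (f (a i) - netOut n H hout W (a i)) *
    netD n H W D (a i) (H + 1) le_rfl ⟨0, by omega⟩) + lam * inner ℝ W D

lemma lossD_smul (n : ℕ → ℕ) (H N : ℕ) (hout : n (H + 1) = 1)
    (a : Fin N → EuclideanSpace ℝ (Fin (n 0)))
    (f : EuclideanSpace ℝ (Fin (n 0)) → ℝ) (lam : ℝ) (W D : WeightSpace n H) (t : ℝ)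
    (ht : 0 ≤ t) :
    lossD n H N hout a f lam W (t • D) = t * lossD n H N hout a f lam W D := by
  unfold lossD
  simp only [netD_smul n H W D _ t ht, inner_smul_right, Pi.smul_apply, smul_eq_mul]
  have : ∀ i, (f (a i) - netOut n H hout W (a i)) *
      (t * netD n H W D (a i) (H + 1) le_rfl ⟨0, by omega⟩) =
      t * ((f (a i) - netOut n H hout W (a i)) *
      netD n H W D (a i) (H + 1) le_rfl ⟨0, by omega⟩) := fun i => by ring
  simp only [this, ← Finset.mul_sum]
  ring

lemma lossReg_expand (n : ℕ → ℕ) (H N : ℕ) (hout : n (H + 1) = 1)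
    (a : Fin N → EuclideanSpace ℝ (Fin (n 0)))
    (f : EuclideanSpace ℝ (Fin (n 0)) → ℝ) (lam : ℝ) (W D : WeightSpace n H) :
    lossReg n H N hout a f lam (W + D) - lossReg n H N hout a f lam W =
      lossD n H N hout a f lam W D
      - (1 / (N : ℝ)) * ∑ i, (f (a i) - netOut n H hout W (a i)) *
        (netOut n H hout (W + D) (a i) - netOut n H hout W (a i) -
          netD n H W D (a i) (H + 1) le_rfl ⟨0, by omega⟩)
      + (1 / (2 * (N : ℝ))) * ∑ i, (netOut n H hout (W + D) (a i) - netOut n H hout W (a i)) ^ 2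
      + lam / 2 * ‖D‖ ^ 2 := by
  unfold lossReg loss lossD
  rw [norm_add_sq_real]
  have h : (1 / (2 * (N : ℝ))) = (1 / (N : ℝ)) * (1 / 2) := by
    rw [one_div_mul_one_div, mul_comm]
  rw [h]
  have key : ∑ i, (f (a i) - netOut n H hout (W + D) (a i)) ^ 2 =
      ∑ i, (f (a i) - netOut n H hout W (a i)) ^ 2
      - 2 * ∑ i, (f (a i) - netOut n H hout W (a i)) *
        (netOut n H hout (W + D) (a i) - netOut n H hout W (a i) -
          netD n H W D (a i) (H + 1) le_rfl ⟨0, by omega⟩)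
      - 2 * ∑ i, (f (a i) - netOut n H hout W (a i)) *
        netD n H W D (a i) (H + 1) le_rfl ⟨0, by omega⟩
      + ∑ i, (netOut n H hout (W + D) (a i) - netOut n H hout W (a i)) ^ 2 := by
    simp only [Finset.mul_sum, ← Finset.sum_sub_distrib, ← Finset.sum_add_distrib]
    exact Finset.sum_congr rfl fun i _ => by ring
  rw [key]
  ring

lemma mean_abs_le (N : ℕ) (p : Fin N → ℝ) :
    (1 / (N : ℝ)) * ∑ i, |p i| ≤ Real.sqrt 2 * Real.sqrt ((1 / (2 * (N : ℝ))) * ∑ i, p i ^ 2) := by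
  rw [← Real.sqrt_mul (by norm_num)]
  apply Real.le_sqrt_of_sq_le
  rcases Nat.eq_zero_or_pos N with rfl | hN
  · simp
  have hN' : (0 : ℝ) < N := by exact_mod_cast hN
  have h := sq_sum_le_card_mul_sum_sq (s := Finset.univ) (f := fun i => |p i|)
  simp only [sq_abs, Finset.card_univ, Fintype.card_fin] at h
  calc (1 / (N : ℝ) * ∑ i, |p i|) ^ 2 = (1 / (N : ℝ)) ^ 2 * (∑ i, |p i|) ^ 2 := by ring
    _ ≤ (1 / (N : ℝ)) ^ 2 * (N * ∑ i, p i ^ 2) := by gcongr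
    _ = _ := by field_simp

lemma err_sum_le (N : ℕ) (p e : Fin N → ℝ) (B : ℝ) (he : ∀ i, |e i| ≤ B) :
    |(1 / (N : ℝ)) * ∑ i, p i * e i| ≤ (1 / (N : ℝ)) * (∑ i, |p i|) * B := by
  rw [abs_mul, abs_of_nonneg (by positivity : 0 ≤ 1 / (N : ℝ)), mul_assoc, Finset.sum_mul]
  apply mul_le_mul_of_nonneg_left _ (by positivity)
  refine (Finset.abs_sum_le_sum_abs _ _).trans (Finset.sum_le_sum fun i _ => ?_)
  rw [abs_mul]
  exact mul_le_mul_of_nonneg_left (he i) (abs_nonneg _)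

lemma out_err (n : ℕ → ℕ) (H N : ℕ) (hH : 1 ≤ H) (hout : n (H + 1) = 1)
    (a : Fin N → EuclideanSpace ℝ (Fin (n 0))) (r : ℝ)
    (hnorm : ∀ i, ‖a i‖ ≤ r) (W : WeightSpace n H) :
    ∀ᶠ D : WeightSpace n H in nhds 0, ∀ i,
      |netOut n H hout (W + D) (a i) - netOut n H hout W (a i) -
          netD n H W D (a i) (H + 1) le_rfl ⟨0, by omega⟩| ≤
        ((H : ℝ) * (H + 1)) / 2 * (starNorm n H W + ‖D‖) ^ (H - 1) * r * ‖D‖ ^ 2 := by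
  rw [Filter.eventually_all]
  intro i
  filter_upwards [act_err n H W (a i) r (hnorm i) (H + 1) le_rfl] with D hD
  refine (abs_le_nm (netAct n H (W + D) (a i) (H + 1) le_rfl -
    netAct n H W (a i) (H + 1) le_rfl - netD n H W D (a i) (H + 1) le_rfl)
    ⟨0, by omega⟩).trans (hD.trans (le_of_eq ?_))
  have : H + 1 - 2 = H - 1 := by omega
  rw [this]
  push_cast
  ring

lemma out_diff (n : ℕ → ℕ) (H N : ℕ) (hout : n (H + 1) = 1)
    (a : Fin N → EuclideanSpace ℝ (Fin (n 0))) (r : ℝ)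
    (hnorm : ∀ i, ‖a i‖ ≤ r) (W D : WeightSpace n H) (i : Fin N) :
      |netOut n H hout (W + D) (a i) - netOut n H hout W (a i)| ≤
        (H + 1) * (starNorm n H W + ‖D‖) ^ H * r * ‖D‖ := by
  refine (abs_le_nm (netAct n H (W + D) (a i) (H + 1) le_rfl -
    netAct n H W (a i) (H + 1) le_rfl)
    ⟨0, by omega⟩).trans ((act_diff n H W D (a i) r _ (hnorm i) le_rfl (H + 1) le_rfl).trans
      (le_of_eq ?_))
  simp

lemma lossReg_upper (n : ℕ → ℕ) (H N : ℕ) (hH : 1 ≤ H) (hout : n (H + 1) = 1)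
    (a : Fin N → EuclideanSpace ℝ (Fin (n 0)))
    (f : EuclideanSpace ℝ (Fin (n 0)) → ℝ) (r lam : ℝ) (hr : 0 < r)
    (hnorm : ∀ i, ‖a i‖ ≤ r) (W : WeightSpace n H) :
    ∃ K : ℝ, ∀ᶠ D : WeightSpace n H in nhds 0,
      lossReg n H N hout a f lam (W + D) - lossReg n H N hout a f lam W ≤
        lossD n H N hout a f lam W D + K * ‖D‖ ^ 2 := by
  have hw := starNorm_nonneg n H W
  refine ⟨(1 / (N : ℝ)) * (∑ i, |f (a i) - netOut n H hout W (a i)|) *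
      (((H : ℝ) * (H + 1)) / 2 * (starNorm n H W + 1) ^ (H - 1) * r) +
      (1 / (2 * (N : ℝ))) * (N * ((H + 1) * (starNorm n H W + 1) ^ H * r) ^ 2) + lam / 2, ?_⟩
  filter_upwards [out_err n H N hH hout a r hnorm W, Metric.ball_mem_nhds 0 one_pos] with D hD hD1
  have hD1' : ‖D‖ ≤ 1 := by simpa using (mem_ball_zero_iff.mp hD1).le
  rw [lossReg_expand]
  have h1 := err_sum_le N (fun i => f (a i) - netOut n H hout W (a i)) _
    (((H : ℝ) * (H + 1)) / 2 * (starNorm n H W + 1) ^ (H - 1) * r * ‖D‖ ^ 2)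
    (fun i => (hD i).trans (by gcongr))
  have h2 : ∑ i, (netOut n H hout (W + D) (a i) - netOut n H hout W (a i)) ^ 2 ≤
      N * ((H + 1) * (starNorm n H W + 1) ^ H * r) ^ 2 * ‖D‖ ^ 2 := by
    calc _ ≤ ∑ i : Fin N, ((H + 1) * (starNorm n H W + 1) ^ H * r * ‖D‖) ^ 2 := by
          apply Finset.sum_le_sum
          intro i _
          rw [← sq_abs]
          have h3 : |netOut n H hout (W + D) (a i) - netOut n H hout W (a i)| ≤
            (H + 1) * (starNorm n H W + 1) ^ H * r * ‖D‖ :=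
            (out_diff n H N hout a r hnorm W D i).trans (by gcongr)
          gcongr
      _ = _ := by simp; ring
  have h3 := mul_le_mul_of_nonneg_left h2 (by positivity : 0 ≤ 1 / (2 * (N : ℝ)))
  have h4 := neg_abs_le ((1 / (N : ℝ)) * ∑ i, (f (a i) - netOut n H hout W (a i)) *
        (netOut n H hout (W + D) (a i) - netOut n H hout W (a i) -
          netD n H W D (a i) (H + 1) le_rfl ⟨0, by omega⟩))
  linarith

lemma lossD_nonneg (n : ℕ → ℕ) (H N : ℕ) (hH : 1 ≤ H) (hout : n (H + 1) = 1)
    (a : Fin N → EuclideanSpace ℝ (Fin (n 0)))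
    (f : EuclideanSpace ℝ (Fin (n 0)) → ℝ) (r lam : ℝ) (hr : 0 < r)
    (hnorm : ∀ i, ‖a i‖ ≤ r) (W : WeightSpace n H)
    (hdiff : DifferentiableAt ℝ (lossReg n H N hout a f lam) W)
    (hcrit : fderiv ℝ (lossReg n H N hout a f lam) W = 0) (D : WeightSpace n H) :
    0 ≤ lossD n H N hout a f lam W D := by
  obtain ⟨K, hK⟩ := lossReg_upper n H N hH hout a f r lam hr hnorm W
  have hd := hdiff.hasFDerivAt
  rw [hcrit] at hd
  have hl : HasDerivAt (fun t : ℝ => lossReg n H N hout a f lam (W + t • D)) 0 0 := by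
    have := hd.hasLineDerivAt D
    simpa [HasLineDerivAt] using this
  have ht := hl.tendsto_slope_zero_right
  have ht2 : Filter.Tendsto (fun t : ℝ => lossD n H N hout a f lam W D + K * ‖D‖ ^ 2 * t)
      (nhdsWithin 0 (Set.Ioi 0)) (nhds (lossD n H N hout a f lam W D)) := by
    have : Continuous fun t : ℝ => lossD n H N hout a f lam W D + K * ‖D‖ ^ 2 * t := by fun_prop
    simpa using (this.tendsto 0).mono_left nhdsWithin_le_nhds
  refine le_of_tendsto_of_tendsto ht ht2 ?_
  have hs : Filter.Tendsto (fun t : ℝ => t • D) (nhdsWithin 0 (Set.Ioi 0)) (nhds 0) := by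
    have : Continuous fun t : ℝ => t • D := by fun_prop
    simpa using (this.tendsto 0).mono_left nhdsWithin_le_nhds
  filter_upwards [hs.eventually hK, self_mem_nhdsWithin] with t h1 h2
  have h2' : 0 < t := h2
  rw [lossD_smul _ _ _ _ _ _ _ _ _ _ h2'.le, norm_smul, Real.norm_of_nonneg h2'.le] at h1
  simp only [zero_add, zero_smul, add_zero, smul_eq_mul]
  rw [inv_mul_le_iff₀ h2']
  linarith

/-- every critical point of `ℓ_λ` in `U(λ,θ)` is an isolated local
minimum: if `ℓ_λ` is differentiable at `W ∈ U(λ,θ)` with vanishing derivative, then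
`ℓ_λ(V) > ℓ_λ(W)` for all `V` with `0 < ‖V − W‖ < ε`, for some `ε > 0`. -/
theorem critical_points_are_isolated_local_minima (n : ℕ → ℕ) (H : ℕ) (hH : 1 ≤ H)
    (hout : n (H + 1) = 1) (hwidth : ∀ i, 1 ≤ i → i ≤ H → 1 < n i)
    (N : ℕ) (a : Fin N → EuclideanSpace ℝ (Fin (n 0)))
    (f : EuclideanSpace ℝ (Fin (n 0)) → ℝ)
    (r lam θ : ℝ) (hr : 0 < r) (hθ : 0 < θ) (hθlam : θ < lam)
    (hnorm : ∀ i, ‖a i‖ ≤ r)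
    (W : WeightSpace n H) (hW : W ∈ Uset n H N hout a f lam θ r)
    (hdiff : DifferentiableAt ℝ (lossReg n H N hout a f lam) W)
    (hcrit : fderiv ℝ (lossReg n H N hout a f lam) W = 0) :
    ∃ ε > 0, ∀ V : WeightSpace n H, 0 < ‖V - W‖ → ‖V - W‖ < ε →
      lossReg n H N hout a f lam W < lossReg n H N hout a f lam V := by
  have hw := starNorm_nonneg n H W
  have hH' : (0 : ℝ) < H := by exact_mod_cast hH
  have hU : Real.sqrt (loss n H N hout a f W) * starNorm n H W ^ (H - 1) <
    (lam - θ) / (Real.sqrt 2 * ((H : ℝ) * ((H : ℝ) + 1)) * r) := hW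
  have hU2 : ∀ᶠ D : WeightSpace n H in nhds 0,
      Real.sqrt (loss n H N hout a f W) * (starNorm n H W + ‖D‖) ^ (H - 1) <
      (lam - θ) / (Real.sqrt 2 * ((H : ℝ) * ((H : ℝ) + 1)) * r) := by
    have hc : Continuous fun D : WeightSpace n H =>
      Real.sqrt (loss n H N hout a f W) * (starNorm n H W + ‖D‖) ^ (H - 1) := by fun_prop
    refine (hc.tendsto 0).eventually (gt_mem_nhds ?_)
    simpa using hU
  have hall := hU2.and (out_err n H N hH hout a r hnorm W)
  obtain ⟨ε, hε, hball⟩ := Metric.eventually_nhds_iff.mp hall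
  refine ⟨ε, hε, fun V hV0 hVε => ?_⟩
  obtain ⟨D, rfl⟩ : ∃ D, V = W + D := ⟨V - W, by abel⟩
  rw [add_sub_cancel_left] at hV0 hVε
  obtain ⟨h1, h2⟩ := hball (by simpa using hVε : dist D 0 < ε)
  have hG := lossD_nonneg n H N hH hout a f r lam hr hnorm W hdiff hcrit D
  have hexp := lossReg_expand n H N hout a f lam W D
  have h3 := err_sum_le N (fun i => f (a i) - netOut n H hout W (a i)) _ _ h2
  have h4 := mean_abs_le N (fun i => f (a i) - netOut n H hout W (a i))
  have h5 := le_abs_self ((1 / (N : ℝ)) * ∑ i, (f (a i) - netOut n H hout W (a i)) *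
        (netOut n H hout (W + D) (a i) - netOut n H hout W (a i) -
          netD n H W D (a i) (H + 1) le_rfl ⟨0, by omega⟩))
  have h6 : 0 ≤ (1 / (2 * (N : ℝ))) *
      ∑ i, (netOut n H hout (W + D) (a i) - netOut n H hout W (a i)) ^ 2 := by positivity
  have h7 : (1 / (N : ℝ)) * (∑ i, |f (a i) - netOut n H hout W (a i)|) *
      (((H : ℝ) * (H + 1)) / 2 * (starNorm n H W + ‖D‖) ^ (H - 1) * r * ‖D‖ ^ 2) ≤
      (lam - θ) / 2 * ‖D‖ ^ 2 := by
    rw [lt_div_iff₀ (by positivity)] at h1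
    calc _ ≤ (Real.sqrt 2 * Real.sqrt (loss n H N hout a f W)) *
        (((H : ℝ) * (H + 1)) / 2 * (starNorm n H W + ‖D‖) ^ (H - 1) * r * ‖D‖ ^ 2) :=
          mul_le_mul_of_nonneg_right h4 (by positivity)
      _ = (Real.sqrt (loss n H N hout a f W) * (starNorm n H W + ‖D‖) ^ (H - 1) *
        (Real.sqrt 2 * ((H : ℝ) * ((H : ℝ) + 1)) * r)) / 2 * ‖D‖ ^ 2 := by ring
      _ ≤ _ := by gcongr
  have h8 : 0 < θ / 2 * ‖D‖ ^ 2 := by positivity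
  linarith
end

section
/- For a deep linear network with H ≥ 1, the training loss ℓ(W) = (1/2N) Σ_{i=1}^N (f(aᵢ) − W_Hᵀ⋯W₀ᵀ aᵢ)² is everywhere smooth and satisfies Δℓ(W) ≥ 0 on all of ℝ^m; consequently ℓ has no local maxima unless it is constant. -/
open scoped BigOperators

/-- Activations of the deep linear network: `x_0 = a`, `x_{k+1} = W_k^T x_k`. -/
def linAct (n : ℕ → ℕ) (H : ℕ) (W : WeightSpace n H)
    (a : EuclideanSpace ℝ (Fin (n 0))) : (k : ℕ) → k ≤ H + 1 → (Fin (n k) → ℝ)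
  | 0, _ => a
  | k + 1, h => fun j =>
      ∑ l : Fin (n k), W ⟨⟨k, h⟩, (l, j)⟩ * linAct n H W a k (Nat.le_of_succ_le h) l

/-- Scalar output of the deep linear network, `y(a,W) = W_H^T ⋯ W_0^T a`. -/
def linOut (n : ℕ → ℕ) (H : ℕ) (hout : n (H + 1) = 1) (W : WeightSpace n H)
    (a : EuclideanSpace ℝ (Fin (n 0))) : ℝ :=
  linAct n H W a (H + 1) le_rfl ⟨0, by omega⟩

/-- Quadratic training loss `ℓ(W)` of the deep linear network. -/
noncomputable def linLoss (n : ℕ → ℕ) (H N : ℕ) (hout : n (H + 1) = 1)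
    (a : Fin N → EuclideanSpace ℝ (Fin (n 0)))
    (f : EuclideanSpace ℝ (Fin (n 0)) → ℝ) (W : WeightSpace n H) : ℝ :=
  (1 / (2 * (N : ℝ))) * ∑ i, (f (a i) - linOut n H hout W (a i)) ^ 2

/-- Regularized loss `ℓ_λ(W) = ℓ(W) + (λ/2)‖W‖²` of the deep linear network. -/
noncomputable def linLossReg (n : ℕ → ℕ) (H N : ℕ) (hout : n (H + 1) = 1)
    (a : Fin N → EuclideanSpace ℝ (Fin (n 0)))
    (f : EuclideanSpace ℝ (Fin (n 0)) → ℝ) (lam : ℝ) (W : WeightSpace n H) : ℝ :=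
  linLoss n H N hout a f W + lam / 2 * ‖W‖ ^ 2

lemma aux_coord (n : ℕ → ℕ) (H : ℕ) (W : WeightSpace n H)
    (a : EuclideanSpace ℝ (Fin (n 0))) (c : WeightIdx n H) (k : ℕ) (hk : k ≤ H + 1) :
    ∃ p q : Fin (n k) → ℝ,
      (∀ (t : ℝ) j, linAct n H (W + t • EuclideanSpace.single c (1 : ℝ)) a k hk j
        = p j + t * q j) ∧ (k ≤ c.1 → ∀ j, q j = 0) := by
  induction k with
  | zero => exact ⟨a, 0, by intro t j; simp [linAct], by simp⟩
  | succ k ih =>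
    obtain ⟨p, q, hpq, hq⟩ := ih (Nat.le_of_succ_le hk)
    let e : WeightSpace n H := EuclideanSpace.single c (1 : ℝ)
    have he : ∀ l j, (k : ℕ) ≠ c.1 → e ⟨⟨k, hk⟩, (l, j)⟩ = 0 := by
      intro l j hne
      simp only [e, EuclideanSpace.single, PiLp.single_apply]
      rw [if_neg]
      intro h
      apply hne
      rw [← h]
    have hz : ∀ l j, e ⟨⟨k, hk⟩, (l, j)⟩ * q l = 0 := by
      intro l j
      by_cases h : k = c.1
      · rw [hq h.le l, mul_zero]
      · rw [he l j h, zero_mul]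
    refine ⟨fun j => ∑ l, W ⟨⟨k, hk⟩, (l, j)⟩ * p l,
      fun j => ∑ l, (W ⟨⟨k, hk⟩, (l, j)⟩ * q l + e ⟨⟨k, hk⟩, (l, j)⟩ * p l), ?_, ?_⟩
    · intro t j
      simp only [linAct]
      rw [Finset.mul_sum, ← Finset.sum_add_distrib]
      refine Finset.sum_congr rfl fun l _ => ?_
      rw [hpq t l]
      have : (W + t • EuclideanSpace.single c (1 : ℝ) : WeightSpace n H) ⟨⟨k, hk⟩, (l, j)⟩
          = W ⟨⟨k, hk⟩, (l, j)⟩ + t * e ⟨⟨k, hk⟩, (l, j)⟩ := rfl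
      rw [this]
      linear_combination t ^ 2 * hz l j
    · intro hkc j
      refine Finset.sum_eq_zero fun l _ => ?_
      rw [hq (by omega) l, he l j (by omega)]
      ring

lemma aux_quad (n : ℕ → ℕ) (H N : ℕ) (hout : n (H + 1) = 1)
    (a : Fin N → EuclideanSpace ℝ (Fin (n 0)))
    (f : EuclideanSpace ℝ (Fin (n 0)) → ℝ) (W : WeightSpace n H) (c : WeightIdx n H) :
    ∃ α β γ : ℝ, 0 ≤ α ∧ ∀ t : ℝ,
      linLoss n H N hout a f (W + t • EuclideanSpace.single c (1 : ℝ))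
        = α * t ^ 2 + β * t + γ := by
  have h : ∀ i, ∃ p q : ℝ, ∀ t : ℝ,
      linOut n H hout (W + t • EuclideanSpace.single c (1 : ℝ)) (a i) = p + t * q := by
    intro i
    obtain ⟨p, q, h, -⟩ := aux_coord n H W (a i) c (H + 1) le_rfl
    exact ⟨_, _, fun t => h t _⟩
  choose p q h using h
  refine ⟨(1 / (2 * (N : ℝ))) * ∑ i, q i ^ 2,
    (1 / (2 * (N : ℝ))) * ∑ i, (-2 * (f (a i) - p i) * q i),
    (1 / (2 * (N : ℝ))) * ∑ i, (f (a i) - p i) ^ 2, by positivity, ?_⟩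
  intro t
  unfold linLoss
  simp only [h]
  rw [mul_assoc, mul_assoc, ← mul_add, ← mul_add, Finset.sum_mul, Finset.sum_mul,
    ← Finset.sum_add_distrib, ← Finset.sum_add_distrib]
  congr 1
  refine Finset.sum_congr rfl fun i _ => ?_
  ring

lemma aux_act_smooth (n : ℕ → ℕ) (H : ℕ) (a : EuclideanSpace ℝ (Fin (n 0)))
    (r : WithTop ℕ∞) (k : ℕ) (hk : k ≤ H + 1) (j : Fin (n k)) :
    ContDiff ℝ r (fun W : WeightSpace n H => linAct n H W a k hk j) := by
  induction k with
  | zero => simp only [linAct]; exact contDiff_const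
  | succ k ih =>
    simp only [linAct]
    refine ContDiff.sum fun l _ => ContDiff.mul ?_ (ih _ l)
    fun_prop

lemma aux_smooth (n : ℕ → ℕ) (H N : ℕ) (hout : n (H + 1) = 1)
    (a : Fin N → EuclideanSpace ℝ (Fin (n 0)))
    (f : EuclideanSpace ℝ (Fin (n 0)) → ℝ) (r : WithTop ℕ∞) :
    ContDiff ℝ r (linLoss n H N hout a f) := by
  unfold linLoss
  refine contDiff_const.mul (ContDiff.sum fun i _ => ?_)
  exact (contDiff_const.sub (aux_act_smooth n H (a i) r _ _ _)).pow 2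

lemma aux_quad_const {α β γ δ : ℝ} (hα : 0 ≤ α) (hδ : 0 < δ)
    (h : ∀ t : ℝ, |t| < δ → α * t ^ 2 + β * t + γ ≤ γ) : α = 0 ∧ β = 0 := by
  have h1 := h (δ / 2) (by rw [abs_of_pos (by positivity)]; linarith)
  have h2 := h (-(δ / 2)) (by rw [abs_neg, abs_of_pos (by positivity)]; linarith)
  have h3 : α = 0 := by
    have : α * (δ / 2) ^ 2 ≤ 0 := by nlinarith
    have h5 : 0 < (δ / 2) ^ 2 := by positivity
    nlinarith
  subst h3
  refine ⟨rfl, ?_⟩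
  have h4 : β * (δ / 2) = 0 := by linarith
  rcases mul_eq_zero.1 h4 with h5 | h5
  · exact h5
  · linarith

lemma aux_localmax {ι : Type*} [Fintype ι] [DecidableEq ι] (g : EuclideanSpace ℝ ι → ℝ)
    (hg : ∀ W c, ∃ α β γ : ℝ, 0 ≤ α ∧ ∀ t : ℝ,
      g (W + t • EuclideanSpace.single c (1 : ℝ)) = α * t ^ 2 + β * t + γ)
    (W₀ : EuclideanSpace ℝ ι) (hmax : IsLocalMax g W₀) :
    ∀ᶠ W in nhds W₀, g W = g W₀ := by
  have hc1 : Continuous (fun x : ι → ℝ => WithLp.toLp 2 x) := PiLp.continuous_toLp 2 _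
  have hc2 : Continuous (fun x : EuclideanSpace ℝ ι => WithLp.ofLp x) :=
    PiLp.continuous_ofLp 2 _
  have h1 : ∀ᶠ x in nhds (WithLp.ofLp W₀), g (WithLp.toLp 2 x) ≤ g W₀ :=
    (hc1.tendsto (WithLp.ofLp W₀)).eventually hmax
  obtain ⟨ε, hε, hbox⟩ := Metric.eventually_nhds_iff.1 h1
  have key : ∀ x : ι → ℝ, dist x (WithLp.ofLp W₀) < ε → g (WithLp.toLp 2 x) = g W₀ := by
    intro x hx
    have hall : ∀ S : Finset ι,
        g (WithLp.toLp 2 (S.piecewise x (WithLp.ofLp W₀))) = g W₀ := by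
      intro S
      induction S using Finset.induction_on with
      | empty => simp
      | insert c S hcS ih =>
        rw [Finset.piecewise_insert]
        set P := S.piecewise x (WithLp.ofLp W₀) with hP
        have hPc : P c = W₀ c := by simp [hP, hcS]
        have hPd : ∀ i, dist (P i) (W₀ i) < ε := by
          intro i
          by_cases hi : i ∈ S
          · simp only [hP, hi, Finset.piecewise_eq_of_mem]
            exact (dist_pi_lt_iff hε).1 hx i
          · simp [hP, hi, hε]
        have hup : ∀ t : ℝ, WithLp.toLp 2 P + t • EuclideanSpace.single c (1 : ℝ)
            = WithLp.toLp 2 (Function.update P c (P c + t)) := by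
          intro t
          ext i
          by_cases hi : i = c
          · subst hi; simp
          · simp [hi]
        obtain ⟨α, β, γ, hα, hq⟩ := hg (WithLp.toLp 2 P) c
        simp only [hup] at hq
        have hγ : g W₀ = γ := by
          have := hq 0
          simpa [ih] using this
        obtain ⟨rfl, rfl⟩ := aux_quad_const (β := β) (γ := γ) hα hε (by
          intro t ht
          rw [← hq t, ← hγ]
          apply hbox
          rw [dist_pi_lt_iff hε]
          intro i
          by_cases hi : i = c
          · subst hi; simpa [hPc, Real.dist_eq] using ht
          · simpa [hi] using hPd i)
        have := hq (x c - P c)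
        simpa [hγ] using this
    simpa using hall Finset.univ
  have h2 : ∀ᶠ x in nhds (WithLp.ofLp W₀), g (WithLp.toLp 2 x) = g W₀ :=
    Metric.eventually_nhds_iff.2 ⟨ε, hε, fun x hx => key x hx⟩
  exact (hc2.tendsto W₀).eventually h2

/-- for a deep linear network with `H ≥ 1`, the training loss `ℓ` is
everywhere smooth, its Laplacian (in the weight variables) is everywhere `≥ 0`, and
consequently `ℓ` has no local maxima unless it is constant. -/
theorem linear_loss_smooth_subharmonic_no_local_max (n : ℕ → ℕ) (H : ℕ) (hH : 1 ≤ H)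
    (hout : n (H + 1) = 1) (hwidth : ∀ i, 1 ≤ i → i ≤ H → 1 < n i)
    (N : ℕ) (a : Fin N → EuclideanSpace ℝ (Fin (n 0)))
    (f : EuclideanSpace ℝ (Fin (n 0)) → ℝ) :
    ContDiff ℝ (⊤ : ℕ∞) (linLoss n H N hout a f) ∧
    (∀ W : WeightSpace n H,
      0 ≤ ∑ c : WeightIdx n H,
        deriv (deriv fun t : ℝ =>
          linLoss n H N hout a f (W + t • EuclideanSpace.single c (1 : ℝ))) 0) ∧
    ((∃ Wstar : WeightSpace n H, IsLocalMax (linLoss n H N hout a f) Wstar) →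
      ∀ V V' : WeightSpace n H, linLoss n H N hout a f V = linLoss n H N hout a f V') := by
  refine ⟨aux_smooth n H N hout a f _, ?_, ?_⟩
  · intro W
    refine Finset.sum_nonneg fun c _ => ?_
    obtain ⟨α, β, γ, hα, h⟩ := aux_quad n H N hout a f W c
    have h0 : (fun t : ℝ => linLoss n H N hout a f (W + t • EuclideanSpace.single c (1 : ℝ)))
        = fun t => α * t ^ 2 + β * t + γ := funext h
    rw [h0]
    have h1 : deriv (fun t : ℝ => α * t ^ 2 + β * t + γ) = fun t => 2 * α * t + β := by
      funext t
      have := ((((hasDerivAt_id t).pow 2).const_mul α).add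
        ((hasDerivAt_id t).const_mul β)).add_const γ
      refine HasDerivAt.deriv (this.congr_deriv ?_)
      simp
      ring
    have h2 : deriv (fun t : ℝ => 2 * α * t + β) 0 = 2 * α := by
      have := ((hasDerivAt_id (0 : ℝ)).const_mul (2 * α)).add_const β
      refine HasDerivAt.deriv (this.congr_deriv ?_)
      simp
    rw [h1, h2]
    positivity
  · rintro ⟨W₀, hmax⟩ V V'
    have hev := aux_localmax _ (aux_quad n H N hout a f) W₀ hmax
    have han : AnalyticOnNhd ℝ (linLoss n H N hout a f) Set.univ := fun x _ =>
      ((aux_smooth n H N hout a f ⊤).contDiffAt (x := x)).analyticAt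
    have heq := han.eq_of_eventuallyEq (g := fun _ => linLoss n H N hout a f W₀)
      (fun x _ => analyticAt_const) hev
    rw [congrFun heq V, congrFun heq V']
end
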